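/- Under the hypotheses above (b ≠ 0 constant and ∇̂-parallel), the function f(y) = ĝ(y,b) restricted to S(1) = {F = 1} satisfies the Obata equation ∇_X ∇f + f X = 0 for every tangent vector field X on S(1), where ∇ is the Levi-Civita connection of the induced metric on S(1). Consequently S(1) is isometric to the unit round sphere and hence has constant sectional curvature 1. -/

import Mathlib

/-!
A Minkowski norm `F` admitting a nonzero constant parallel field `b` is Euclidean, so Obata's
theorem is not needed: the indicatrix is linearly isometric to the round sphere.

Since `g = ½ Hess F²`, the derivatives of `g` are totally symmetric and the Christoffel symbols are
`γⁱ_{jk} = ½ gⁱˢ ∂ₖ g_{sj}` (`christoffel_gF`). As `(gⁱˢ)` is invertible, `∇̂ b = 0` says exactly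
that `g` has zero derivative along `b` at every nonzero point (`fderiv_gF_parallel`). If `y` is not
on the line `ℝ b`, then `g(y) = g(y + t b)` for all `t`. As `g` is positively homogeneous of degree
`0`, this equals `g(t⁻¹ y + b)` for `t > 0`, and letting `t → ∞` gives `g(y) = g(b)`. By
continuity this extends to all `y ≠ 0` (`gF_const`).

With `g` equal to a constant positive definite matrix `A = Bᵀ B`, the connection and the curvature
vanish, and Euler's identity gives `F(y)² = ĝ(y, y) = |B y|²` (`gmet_gF_self`). The Obata equation
is then the derivative of `b - ĝ(y,b) y`, the map `y ↦ B y` is the isometry onto the unit sphere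
(`bijOn_mulVec`, `pathDist_mulVec`), and the Gauss equation gives curvature `1`
(`hypSec_of_const`).
-/

open Set

/-- Partial derivative of a scalar function on `ℝⁿ` in the `i`-th coordinate direction. -/
noncomputable def pd {n : ℕ} (i : Fin n) (f : (Fin n → ℝ) → ℝ) (y : Fin n → ℝ) : ℝ :=
  fderiv ℝ f y (Pi.single i 1)

/-- Fundamental tensor `g_{ij}(y) = ½ ∂²(F²)/∂yⁱ∂yʲ` of a Minkowski norm `F`. -/
noncomputable def gF {n : ℕ} (F : (Fin n → ℝ) → ℝ) (y : Fin n → ℝ) (i j : Fin n) : ℝ :=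
  pd i (pd j (fun z => F z ^ 2)) y / 2

/-- The metric evaluated on two vectors: `g_y(u,v) = g_{ij}(y) uⁱ vʲ`. -/
def gmet {n : ℕ} (G : (Fin n → ℝ) → Fin n → Fin n → ℝ) (y u v : Fin n → ℝ) : ℝ :=
  ∑ i, ∑ j, G y i j * u i * v j

/-- Inverse metric `gⁱʲ(y)` (matrix inverse). -/
noncomputable def ginv {n : ℕ} (G : (Fin n → ℝ) → Fin n → Fin n → ℝ) (y : Fin n → ℝ) :
    Matrix (Fin n) (Fin n) ℝ :=
  (Matrix.of (G y))⁻¹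

/-- Christoffel symbols of the second kind of the metric `G`:
`γⁱ_{jk} = (gⁱˢ/2)(∂g_{sj}/∂yᵏ + ∂g_{sk}/∂yʲ − ∂g_{jk}/∂yˢ)`. -/
noncomputable def christoffel {n : ℕ} (G : (Fin n → ℝ) → Fin n → Fin n → ℝ)
    (y : Fin n → ℝ) (i j k : Fin n) : ℝ :=
  (1 / 2) * ∑ s, ginv G y i s *
    (pd k (fun z => G z s j) y + pd j (fun z => G z s k) y - pd s (fun z => G z j k) y)

/-- Cartan torsion `C_{ijk} = (F/4) ∂³F²/∂yⁱ∂yʲ∂yᵏ`. -/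
noncomputable def cartan {n : ℕ} (F : (Fin n → ℝ) → ℝ) (y : Fin n → ℝ) (i j k : Fin n) : ℝ :=
  (F y / 4) * pd i (pd j (pd k (fun z => F z ^ 2))) y

/-- Mixed Cartan torsion `Cⁱ_{jk} = gⁱˢ C_{sjk}`. -/
noncomputable def cartanMixed {n : ℕ} (F : (Fin n → ℝ) → ℝ) (y : Fin n → ℝ) (i j k : Fin n) : ℝ :=
  ∑ s, ginv (gF F) y i s * cartan F y s j k

/-- Covariant derivative (w.r.t. the Levi-Civita connection of `G`) of the vector field `V`
in the direction of the vector `X` at the point `y`: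
`(∇_X V)ⁱ = X(Vⁱ) + γⁱ_{jk} Xʲ Vᵏ`. -/
noncomputable def covVec {n : ℕ} (G : (Fin n → ℝ) → Fin n → Fin n → ℝ)
    (V : (Fin n → ℝ) → Fin n → ℝ) (X y : Fin n → ℝ) : Fin n → ℝ :=
  fun i => fderiv ℝ (fun z => V z i) y X + ∑ j, ∑ k, christoffel G y i j k * X j * V y k

/-- Curvature tensor `Rⁱ_{jkl} = ∂γⁱ_{jl}/∂yᵏ − ∂γⁱ_{jk}/∂yˡ + γⁱ_{sk}γˢ_{jl} − γⁱ_{sl}γˢ_{jk}`. -/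
noncomputable def riem {n : ℕ} (G : (Fin n → ℝ) → Fin n → Fin n → ℝ)
    (y : Fin n → ℝ) (i j k l : Fin n) : ℝ :=
  pd k (fun z => christoffel G z i j l) y - pd l (fun z => christoffel G z i j k) y +
    ∑ s, (christoffel G y i s k * christoffel G y s j l -
      christoffel G y i s l * christoffel G y s j k)

/-- The curvature operator `R(X,Y)Z`, with components `Zʲ Xᵏ Yˡ Rⁱ_{jkl}`. -/
noncomputable def riemVec {n : ℕ} (G : (Fin n → ℝ) → Fin n → Fin n → ℝ)
    (y X Y Z : Fin n → ℝ) : Fin n → ℝ :=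
  fun i => ∑ j, ∑ k, ∑ l, riem G y i j k l * Z j * X k * Y l

/-- Ambient sectional curvature `K̂(U,V) = ĝ(R̂(V,U)V, U) / (ĝ(U,U)ĝ(V,V) − ĝ(U,V)²)`. -/
noncomputable def ambSec {n : ℕ} (G : (Fin n → ℝ) → Fin n → Fin n → ℝ)
    (y U V : Fin n → ℝ) : ℝ :=
  gmet G y (riemVec G y V U V) U /
    (gmet G y U U * gmet G y V V - (gmet G y U V) ^ 2)

/-- Sectional curvature of a hypersurface with unit normal `ν`, defined through the Gauss
equation: `K(U,V) = K̂(U,V) + (h(U,U)h(V,V) − h(U,V)²)/(g(U,U)g(V,V) − g(U,V)²)`, where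
`h(X,Y) = ĝ(∇̂_X ν, Y)` (the sign of `h` is immaterial as it appears quadratically). -/
noncomputable def hypSec {n : ℕ} (G : (Fin n → ℝ) → Fin n → Fin n → ℝ)
    (ν : (Fin n → ℝ) → Fin n → ℝ) (y U V : Fin n → ℝ) : ℝ :=
  ambSec G y U V +
    (gmet G y (covVec G ν U y) U * gmet G y (covVec G ν V y) V -
      (gmet G y (covVec G ν U y) V) ^ 2) /
    (gmet G y U U * gmet G y V V - (gmet G y U V) ^ 2)

/-- `F` is a Minkowski norm on `ℝⁿ`: smooth away from the origin, positive on nonzero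
vectors, positively homogeneous of degree one, and strongly convex (the fundamental
tensor is positive definite). -/
structure IsMinkowskiNorm (n : ℕ) (F : (Fin n → ℝ) → ℝ) : Prop where
  smooth : ContDiffOn ℝ (⊤ : ℕ∞) F {y | y ≠ 0}
  nonneg : ∀ y, 0 ≤ F y
  pos : ∀ y : Fin n → ℝ, y ≠ 0 → 0 < F y
  homog : ∀ lam : ℝ, 0 < lam → ∀ y, F (lam • y) = lam * F y
  posdef : ∀ y : Fin n → ℝ, y ≠ 0 → ∀ X : Fin n → ℝ, X ≠ 0 → 0 < gmet (gF F) y X X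

/-- `M` is a hypersurface of the Riemannian space with metric `G`, with unit normal field
`ν`: `ν` is smooth near `M` and of unit length along `M`, and every `g`-orthogonal
direction to `ν` at a point of `M` is realized as the velocity of a smooth curve in `M`. -/
structure IsHypersurface (n : ℕ) (G : (Fin n → ℝ) → Fin n → Fin n → ℝ)
    (M : Set (Fin n → ℝ)) (ν : (Fin n → ℝ) → Fin n → ℝ) : Prop where
  nonempty : M.Nonempty
  conn : IsPreconnected M
  smooth_nu : ∃ U, IsOpen U ∧ M ⊆ U ∧ ∀ i, ContDiffOn ℝ (⊤ : ℕ∞) (fun z => ν z i) U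
  unit : ∀ y ∈ M, gmet G y (ν y) (ν y) = 1
  curve : ∀ y ∈ M, ∀ X : Fin n → ℝ, gmet G y X (ν y) = 0 →
    ∃ c : ℝ → (Fin n → ℝ), ∃ ε > (0 : ℝ), ContDiff ℝ (⊤ : ℕ∞) c ∧ c 0 = y ∧ deriv c 0 = X ∧
      ∀ t : ℝ, |t| < ε → c t ∈ M

/-- The hypersurface `M` with unit normal `ν` is totally umbilical with mean curvature `H`:
`∇̂_X ν = −H X` for every tangent vector `X` at every point of `M`. -/
def TotallyUmbilical {n : ℕ} (G : (Fin n → ℝ) → Fin n → Fin n → ℝ)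
    (M : Set (Fin n → ℝ)) (ν : (Fin n → ℝ) → Fin n → ℝ) (H : (Fin n → ℝ) → ℝ) : Prop :=
  ∀ y ∈ M, ∀ X : Fin n → ℝ, gmet G y X (ν y) = 0 → covVec G ν X y = -(H y) • X

/-- Riemannian length of a path `c : [0,1] → ℝⁿ` with respect to the metric `G`. -/
noncomputable def pathLength {n : ℕ} (G : (Fin n → ℝ) → Fin n → Fin n → ℝ)
    (c : ℝ → Fin n → ℝ) : ℝ :=
  ∫ t in (0:ℝ)..1, Real.sqrt (gmet G (c t) (deriv c t) (deriv c t))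

/-- Intrinsic Riemannian distance in a subset `S` of `ℝⁿ` with respect to `G`: the infimum
of lengths of `C¹` paths inside `S` joining the two points. -/
noncomputable def pathDist {n : ℕ} (G : (Fin n → ℝ) → Fin n → Fin n → ℝ)
    (S : Set (Fin n → ℝ)) (a b : Fin n → ℝ) : ℝ :=
  sInf {L : ℝ | ∃ c : ℝ → Fin n → ℝ, ContDiff ℝ 1 c ∧ c 0 = a ∧ c 1 = b ∧
    (∀ t ∈ Set.Icc (0:ℝ) 1, c t ∈ S) ∧ L = pathLength G c}

/-- The standard Euclidean metric on `ℝⁿ`. -/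
def euclG (n : ℕ) : (Fin n → ℝ) → Fin n → Fin n → ℝ :=
  fun _ i j => if i = j then 1 else 0

/-- The round sphere of radius `r` centered at the origin of Euclidean `ℝⁿ`. -/
def euclSphere (n : ℕ) (r : ℝ) : Set (Fin n → ℝ) :=
  {z | ∑ i, z i ^ 2 = r ^ 2}

open scoped Topology

/-! ### The fundamental tensor as a Hessian metric -/

theorem contDiffAt_sq {n : ℕ} {F : (Fin n → ℝ) → ℝ} (hF : IsMinkowskiNorm n F)
    {y : Fin n → ℝ} (hy : y ≠ 0) : ContDiffAt ℝ (⊤ : ℕ∞) (fun z => F z ^ 2) y :=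
  (hF.smooth.contDiffAt (isOpen_ne.mem_nhds hy)).pow 2

theorem contDiffAt_pd {n : ℕ} {f : (Fin n → ℝ) → ℝ} {y : Fin n → ℝ} (i : Fin n)
    (hf : ContDiffAt ℝ (⊤ : ℕ∞) f y) : ContDiffAt ℝ (⊤ : ℕ∞) (pd i f) y :=
  (hf.fderiv_right (m := (⊤ : ℕ∞)) (by simp)).clm_apply contDiffAt_const

theorem pd_comm {n : ℕ} {f : (Fin n → ℝ) → ℝ} {y : Fin n → ℝ} (i j : Fin n)
    (hf : ContDiffAt ℝ (⊤ : ℕ∞) f y) : pd i (pd j f) y = pd j (pd i f) y := by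
  have hd : DifferentiableAt ℝ (fderiv ℝ f) y :=
    (hf.fderiv_right (m := (⊤ : ℕ∞)) (by simp)).differentiableAt (by simp)
  have h : IsSymmSndFDerivAt ℝ f y := hf.isSymmSndFDerivAt (by
    rw [minSmoothness_of_isRCLikeNormedField]; exact WithTop.coe_le_coe.mpr (le_top : (2 : ℕ∞) ≤ ⊤))
  have key : ∀ i j : Fin n, pd i (pd j f) y
      = fderiv ℝ (fderiv ℝ f) y (Pi.single i 1) (Pi.single j 1) := by
    intro i j
    have : pd j f = fun z => fderiv ℝ f z (Pi.single j 1) := rfl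
    rw [this, pd, fderiv_clm_apply hd (differentiableAt_const _)]
    simp
  rw [key, key]
  exact h _ _

theorem contDiffAt_gF {n : ℕ} {F : (Fin n → ℝ) → ℝ} (hF : IsMinkowskiNorm n F)
    {y : Fin n → ℝ} (hy : y ≠ 0) (i j : Fin n) :
    ContDiffAt ℝ (⊤ : ℕ∞) (fun z => gF F z i j) y :=
  (contDiffAt_pd i (contDiffAt_pd j (contDiffAt_sq hF hy))).div_const 2

theorem gF_symm {n : ℕ} {F : (Fin n → ℝ) → ℝ} (hF : IsMinkowskiNorm n F)
    {y : Fin n → ℝ} (hy : y ≠ 0) (i j : Fin n) : gF F y i j = gF F y j i := by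
  rw [gF, gF, pd_comm i j (contDiffAt_sq hF hy)]

theorem gmet_gF_comm {n : ℕ} {F : (Fin n → ℝ) → ℝ} (hF : IsMinkowskiNorm n F)
    {y : Fin n → ℝ} (hy : y ≠ 0) (u v : Fin n → ℝ) :
    gmet (gF F) y u v = gmet (gF F) y v u := by
  unfold gmet
  rw [Finset.sum_comm]
  refine Finset.sum_congr rfl fun i _ => Finset.sum_congr rfl fun j _ => ?_
  rw [gF_symm hF hy j i]; ring

/-- The derivative of the fundamental tensor is totally symmetric: transposing a derivative
index with the first metric index changes nothing, since the metric is a Hessian. -/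
theorem pd_gF_symm {n : ℕ} {F : (Fin n → ℝ) → ℝ} (hF : IsMinkowskiNorm n F)
    {y : Fin n → ℝ} (hy : y ≠ 0) (i j k : Fin n) :
    pd i (fun z => gF F z j k) y = pd j (fun z => gF F z i k) y := by
  have h : ∀ i j : Fin n, pd i (fun z => gF F z j k) y
      = pd i (pd j (pd k (fun z => F z ^ 2))) y / 2 := by
    intro i j
    have hd : DifferentiableAt ℝ (pd j (pd k (fun z => F z ^ 2))) y :=
      (contDiffAt_pd j (contDiffAt_pd k (contDiffAt_sq hF hy))).differentiableAt (by simp)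
    unfold gF
    simp only [div_eq_mul_inv]
    rw [pd, fderiv_mul_const hd]
    simp [pd, mul_comm]
  rw [h, h, pd_comm i j (contDiffAt_pd k (contDiffAt_sq hF hy))]

/-- For a Hessian metric the Christoffel symbols reduce to `γⁱ_{jk} = ½ gⁱˢ ∂g_{sj}/∂yᵏ`. -/
theorem christoffel_gF {n : ℕ} {F : (Fin n → ℝ) → ℝ} (hF : IsMinkowskiNorm n F)
    {y : Fin n → ℝ} (hy : y ≠ 0) (i j k : Fin n) :
    christoffel (gF F) y i j k =
      (1 / 2) * ∑ s, ginv (gF F) y i s * pd k (fun z => gF F z s j) y := by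
  unfold christoffel
  congr 1
  refine Finset.sum_congr rfl fun s _ => ?_
  rw [pd_gF_symm hF hy j s k]
  ring

theorem gmet_eq_dotProduct {n : ℕ} (G : (Fin n → ℝ) → Fin n → Fin n → ℝ)
    (y u v : Fin n → ℝ) : gmet G y u v = u ⬝ᵥ (Matrix.of (G y)).mulVec v := by
  simp only [gmet, dotProduct, Matrix.mulVec, Matrix.of_apply, Finset.mul_sum]
  refine Finset.sum_congr rfl fun i _ => Finset.sum_congr rfl fun j _ => by ring

theorem isUnit_gF {n : ℕ} {F : (Fin n → ℝ) → ℝ} (hF : IsMinkowskiNorm n F)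
    {y : Fin n → ℝ} (hy : y ≠ 0) : IsUnit (Matrix.of (gF F y)) := by
  rw [← Matrix.mulVec_injective_iff_isUnit]
  intro u v huv
  by_contra hne
  have h := hF.posdef y hy (u - v) (sub_ne_zero.mpr hne)
  rw [gmet_eq_dotProduct, Matrix.mulVec_sub, sub_eq_zero.mpr huv] at h
  simp at h

theorem fderiv_eq_sum_pd {n : ℕ} (f : (Fin n → ℝ) → ℝ) (y v : Fin n → ℝ) :
    fderiv ℝ f y v = ∑ k, v k * pd k f y := by
  conv_lhs => rw [pi_eq_sum_univ' v]
  simp [map_sum, pd]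

/-- If the constant field `b` is parallel, the metric is constant along `b`. -/
theorem fderiv_gF_parallel {n : ℕ} {F : (Fin n → ℝ) → ℝ} (hF : IsMinkowskiNorm n F)
    {b : Fin n → ℝ}
    (hpar : ∀ y : Fin n → ℝ, y ≠ 0 → ∀ X : Fin n → ℝ, covVec (gF F) (fun _ => b) X y = 0)
    {y : Fin n → ℝ} (hy : y ≠ 0) (s j : Fin n) :
    fderiv ℝ (fun z => gF F z s j) y b = 0 := by
  have h1 : (Matrix.of (gF F y))⁻¹.mulVec (fun s => fderiv ℝ (fun z => gF F z s j) y b) = 0 := by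
    funext i
    have h := congrFun (hpar y hy (Pi.single j 1)) i
    simp only [covVec, fderiv_fun_const, Pi.zero_apply, zero_apply,
      zero_add] at h
    rw [Finset.sum_eq_single j (by intro k _ hk; simp [hk]) (by simp)] at h
    simp only [Pi.single_eq_same, mul_one, christoffel_gF hF hy] at h
    simp only [Matrix.mulVec, dotProduct, Pi.zero_apply, fderiv_eq_sum_pd _ y b, Finset.mul_sum]
    rw [Finset.sum_comm]
    calc _ = 2 * ∑ k, (1 / 2 * ∑ s, ginv (gF F) y i s * pd k (fun z => gF F z s j) y) * b k := by
          simp only [Finset.mul_sum, Finset.sum_mul, ginv]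
          refine Finset.sum_congr rfl fun k _ => Finset.sum_congr rfl fun s _ => by ring
      _ = 0 := by rw [h, mul_zero]
  have hu : IsUnit (Matrix.of (gF F y)).det :=
    (Matrix.isUnit_iff_isUnit_det _).mp (isUnit_gF hF hy)
  have h2 := congrArg (Matrix.of (gF F y)).mulVec h1
  rw [Matrix.mulVec_mulVec, Matrix.mul_nonsing_inv _ hu, Matrix.one_mulVec,
    Matrix.mulVec_zero] at h2
  exact congrFun h2 s

/-! ### Homogeneity -/

/-- No differentiability is needed: both sides vanish together where `f` is not
differentiable. -/
theorem pd_smul_of_homog {n : ℕ} {f : (Fin n → ℝ) → ℝ} {l c : ℝ} (hl : l ≠ 0)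
    (hf : ∀ z, f (l • z) = c * f z) (i : Fin n) (z : Fin n → ℝ) :
    pd i f (l • z) = l⁻¹ * c * pd i f z := by
  have h1 : fderiv ℝ (fun z => f (l • z)) z = l • fderiv ℝ f (l • z) := fderiv_comp_smul l
  have h2 : fderiv ℝ (fun z => f (l • z)) z = c • fderiv ℝ f z := by
    simp only [hf]
    exact congrFun (fderiv_const_smul_field (f := f) c) z
  have h3 := congrArg (fun L => L (Pi.single i 1)) (h1.symm.trans h2)
  simp only [smul_apply, smul_eq_mul] at h3
  simp only [pd]
  rw [mul_assoc, ← h3, inv_mul_cancel_left₀ hl]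

theorem sq_homog {n : ℕ} {F : (Fin n → ℝ) → ℝ} (hF : IsMinkowskiNorm n F) {l : ℝ} (hl : 0 < l)
    (z : Fin n → ℝ) : F (l • z) ^ 2 = l ^ 2 * F z ^ 2 := by
  rw [hF.homog l hl]; ring

theorem pd_sq_homog {n : ℕ} {F : (Fin n → ℝ) → ℝ} (hF : IsMinkowskiNorm n F) {l : ℝ}
    (hl : 0 < l) (j : Fin n) (z : Fin n → ℝ) :
    pd j (fun z => F z ^ 2) (l • z) = l * pd j (fun z => F z ^ 2) z := by
  rw [pd_smul_of_homog (f := fun z => F z ^ 2) hl.ne' (sq_homog hF hl)]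
  field_simp

theorem gF_homog {n : ℕ} {F : (Fin n → ℝ) → ℝ} (hF : IsMinkowskiNorm n F) {l : ℝ}
    (hl : 0 < l) (i j : Fin n) (z : Fin n → ℝ) : gF F (l • z) i j = gF F z i j := by
  rw [gF, pd_smul_of_homog hl.ne' (pd_sq_homog hF hl j), inv_mul_cancel₀ hl.ne', one_mul, gF]

/-- Euler's identity for positively homogeneous functions of degree `k`. -/
theorem fderiv_self_of_homog {n : ℕ} {f : (Fin n → ℝ) → ℝ} {k : ℕ} {y : Fin n → ℝ}
    (hd : DifferentiableAt ℝ f y) (hf : ∀ l : ℝ, 0 < l → ∀ z, f (l • z) = l ^ k * f z) :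
    fderiv ℝ f y y = k * f y := by
  have h1 : HasDerivAt (fun l : ℝ => f (l • y)) (fderiv ℝ f y y) 1 := by
    have hs : HasDerivAt (fun l : ℝ => l • y) y 1 := by
      simpa using (hasDerivAt_id (1 : ℝ)).smul_const y
    have hd' : HasFDerivAt f (fderiv ℝ f y) ((1 : ℝ) • y) := by
      rw [one_smul]; exact hd.hasFDerivAt
    exact hd'.comp_hasDerivAt (1 : ℝ) hs
  have h2 : HasDerivAt (fun l : ℝ => l ^ k * f y) (k * f y) 1 := by
    simpa using (hasDerivAt_pow k (1 : ℝ)).mul_const (f y)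
  refine h1.unique (h2.congr_of_eventuallyEq ?_)
  filter_upwards [lt_mem_nhds (show (0 : ℝ) < 1 by norm_num)] with l hl
  exact hf l hl y

/-- The metric recovers the norm: `F(y)² = g_y(y, y)`. -/
theorem gmet_gF_self {n : ℕ} {F : (Fin n → ℝ) → ℝ} (hF : IsMinkowskiNorm n F)
    {y : Fin n → ℝ} (hy : y ≠ 0) : gmet (gF F) y y y = F y ^ 2 := by
  have h1 : ∀ j, fderiv ℝ (pd j (fun z => F z ^ 2)) y y = pd j (fun z => F z ^ 2) y := by
    intro j
    have := fderiv_self_of_homog (k := 1)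
      ((contDiffAt_pd j (contDiffAt_sq hF hy)).differentiableAt (by simp))
      (fun l hl z => by rw [pow_one]; exact pd_sq_homog hF hl j z)
    simpa using this
  have h2 : fderiv ℝ (fun z => F z ^ 2) y y = 2 * F y ^ 2 := by
    simpa using fderiv_self_of_homog (k := 2) ((contDiffAt_sq hF hy).differentiableAt (by simp))
      (fun l hl z => sq_homog hF hl z)
  rw [fderiv_eq_sum_pd] at h2
  calc gmet (gF F) y y y
      = (∑ j, y j * ∑ i, y i * pd i (pd j (fun z => F z ^ 2)) y) / 2 := by
        simp only [gmet, gF, Finset.mul_sum, Finset.sum_div]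
        rw [Finset.sum_comm]
        refine Finset.sum_congr rfl fun i _ => Finset.sum_congr rfl fun j _ => by ring
    _ = F y ^ 2 := by
        simp only [← fderiv_eq_sum_pd, h1, h2]
        ring

/-! ### Constancy of the metric -/

/-- Off the line through `b`, move to infinity along `b` and rescale: the metric at `y`
equals the metric at `y + t b`, hence at `t⁻¹ y + b`, which tends to `b`. -/
theorem gF_eq_of_not_mem_line {n : ℕ} {F : (Fin n → ℝ) → ℝ} (hF : IsMinkowskiNorm n F)
    {b : Fin n → ℝ} (hb : b ≠ 0)
    (hpar : ∀ y : Fin n → ℝ, y ≠ 0 → ∀ X : Fin n → ℝ, covVec (gF F) (fun _ => b) X y = 0)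
    {y : Fin n → ℝ} (hy : ∀ t : ℝ, y + t • b ≠ 0) (i j : Fin n) :
    gF F y i j = gF F b i j := by
  have hder : ∀ t : ℝ, HasDerivAt (fun t : ℝ => gF F (y + t • b) i j) 0 t := by
    intro t
    have hs : HasDerivAt (fun t : ℝ => y + t • b) b t := by
      simpa using ((hasDerivAt_id t).smul_const b).const_add y
    have := (((contDiffAt_gF hF (hy t) i j).differentiableAt (by simp)).hasFDerivAt).comp_hasDerivAt
      t hs
    rwa [fderiv_gF_parallel hF hpar (hy t)] at this
  have hconst : ∀ t : ℝ, gF F (y + t • b) i j = gF F y i j := by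
    intro t
    have := is_const_of_deriv_eq_zero (fun t => (hder t).differentiableAt)
      (fun t => (hder t).deriv) t 0
    simpa using this
  have hlim : Filter.Tendsto (fun s : ℝ => gF F (s • y + b) i j) (𝓝[>] 0) (𝓝 (gF F b i j)) := by
    have hc : Filter.Tendsto (fun s : ℝ => s • y + b) (𝓝[>] 0) (𝓝 b) := by
      have : Continuous (fun s : ℝ => s • y + b) := by fun_prop
      have h0 := (this.tendsto 0).mono_left (nhdsWithin_le_nhds (s := Ioi 0))
      simpa using h0
    exact ((contDiffAt_gF hF hb i j).continuousAt.tendsto).comp hc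
  refine tendsto_nhds_unique (tendsto_const_nhds.congr' ?_) hlim
  filter_upwards [self_mem_nhdsWithin] with s hs
  have hs' : (0 : ℝ) < s := hs
  rw [← hconst s⁻¹, ← gF_homog hF hs' i j (y + s⁻¹ • b), smul_add, smul_smul,
    mul_inv_cancel₀ hs'.ne', one_smul]

/-- There is a direction `v` outside the line through `b`. -/
theorem exists_forall_add_smul_ne {n : ℕ} (hn : 3 ≤ n) (b : Fin n → ℝ) :
    ∃ v : Fin n → ℝ, ∀ s t : ℝ, s ≠ 0 → s • v + t • b ≠ 0 := by
  have hlt : Submodule.span ℝ {b} ≠ ⊤ := by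
    intro h
    have h1 := finrank_span_le_card (R := ℝ) ({b} : Set (Fin n → ℝ))
    rw [Set.toFinset_singleton, Finset.card_singleton, h, finrank_top, Module.finrank_fin_fun] at h1
    omega
  obtain ⟨v, hv⟩ := SetLike.exists_not_mem_of_ne_top _ hlt
  refine ⟨v, fun s t hs h => hv (Submodule.mem_span_singleton.mpr ⟨-(s⁻¹ * t), ?_⟩)⟩
  have h1 : s • v = -(t • b) := eq_neg_of_add_eq_zero_left h
  calc (-(s⁻¹ * t)) • b = s⁻¹ • -(t • b) := by rw [neg_smul, smul_neg, smul_smul]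
    _ = v := by rw [← h1, smul_smul, inv_mul_cancel₀ hs, one_smul]

/-- A Minkowski norm with a nonzero constant parallel field is Euclidean. -/
theorem gF_const {n : ℕ} (hn : 3 ≤ n) {F : (Fin n → ℝ) → ℝ} (hF : IsMinkowskiNorm n F)
    {b : Fin n → ℝ} (hb : b ≠ 0)
    (hpar : ∀ y : Fin n → ℝ, y ≠ 0 → ∀ X : Fin n → ℝ, covVec (gF F) (fun _ => b) X y = 0)
    {y : Fin n → ℝ} (hy : y ≠ 0) : gF F y = gF F b := by
  funext i j
  by_cases h : ∀ t : ℝ, y + t • b ≠ 0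
  · exact gF_eq_of_not_mem_line hF hb hpar h i j
  push Not at h
  obtain ⟨t₀, ht₀⟩ := h
  obtain ⟨v, hv⟩ := exists_forall_add_smul_ne hn b
  -- points on the line are limits of points `y + s v` off the line
  have hc : Filter.Tendsto (fun s : ℝ => y + s • v) (𝓝[>] 0) (𝓝 y) := by
    have : Continuous (fun s : ℝ => y + s • v) := by fun_prop
    have h0 := (this.tendsto 0).mono_left (nhdsWithin_le_nhds (s := Ioi 0))
    simpa using h0
  have hlim := ((contDiffAt_gF hF hy i j).continuousAt.tendsto).comp hc
  refine tendsto_nhds_unique hlim (tendsto_const_nhds.congr' ?_)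
  filter_upwards [self_mem_nhdsWithin] with s hs
  refine (gF_eq_of_not_mem_line hF hb hpar (fun t h => ?_) i j).symm
  refine hv s (t - t₀) (ne_of_gt hs) ?_
  calc s • v + (t - t₀) • b = (y + s • v + t • b) - (y + t₀ • b) := by module
    _ = 0 := by rw [ht₀, sub_zero]; exact h

theorem ne_zero_of_norm_eq_one {n : ℕ} {F : (Fin n → ℝ) → ℝ} (hF : IsMinkowskiNorm n F)
    {y : Fin n → ℝ} (hy : F y = 1) : y ≠ 0 := by
  rintro rfl
  have h := hF.homog 2 (by norm_num) 0
  rw [smul_zero, hy] at h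
  norm_num at h

/-! ### Geometry of the indicatrix when the metric is constant -/

section ConstantMetric

variable {n : ℕ} {F : (Fin n → ℝ) → ℝ} {A : Fin n → Fin n → ℝ}

theorem gmet_of_const (hA : ∀ y : Fin n → ℝ, y ≠ 0 → gF F y = A) {y : Fin n → ℝ} (hy : y ≠ 0)
    (u v : Fin n → ℝ) : gmet (gF F) y u v = u ⬝ᵥ (Matrix.of A).mulVec v := by
  rw [gmet_eq_dotProduct, hA y hy]

theorem christoffel_of_const (hF : IsMinkowskiNorm n F)
    (hA : ∀ y : Fin n → ℝ, y ≠ 0 → gF F y = A) {y : Fin n → ℝ} (hy : y ≠ 0) (i j k : Fin n) :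
    christoffel (gF F) y i j k = 0 := by
  have h : ∀ s, pd k (fun z => gF F z s j) y = 0 := by
    intro s
    have he : (fun z => gF F z s j) =ᶠ[𝓝 y] fun _ => A s j := by
      filter_upwards [isOpen_ne.mem_nhds hy] with z hz
      rw [hA z hz]
    rw [pd, he.fderiv_eq]
    simp
  rw [christoffel_gF hF hy]
  simp [h]

theorem covVec_of_const (hF : IsMinkowskiNorm n F)
    (hA : ∀ y : Fin n → ℝ, y ≠ 0 → gF F y = A) {y : Fin n → ℝ} (hy : y ≠ 0)
    (V : (Fin n → ℝ) → Fin n → ℝ) (X : Fin n → ℝ) :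
    covVec (gF F) V X y = fun i => fderiv ℝ (fun z => V z i) y X := by
  funext i
  simp [covVec, christoffel_of_const hF hA hy]

theorem riem_of_const (hF : IsMinkowskiNorm n F)
    (hA : ∀ y : Fin n → ℝ, y ≠ 0 → gF F y = A) {y : Fin n → ℝ} (hy : y ≠ 0)
    (i j k l : Fin n) : riem (gF F) y i j k l = 0 := by
  have h : ∀ k i j l, pd k (fun z => christoffel (gF F) z i j l) y = 0 := by
    intro k i j l
    have he : (fun z => christoffel (gF F) z i j l) =ᶠ[𝓝 y] fun _ => 0 := by
      filter_upwards [isOpen_ne.mem_nhds hy] with z hz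
      exact christoffel_of_const hF hA hz i j l
    rw [pd, he.fderiv_eq]
    simp
  simp [riem, h, christoffel_of_const hF hA hy]

theorem fderiv_proj (y X : Fin n → ℝ) (i : Fin n) :
    fderiv ℝ (fun z : Fin n → ℝ => z i) y X = X i := by
  have h : HasFDerivAt (fun z : Fin n → ℝ => z i)
      (ContinuousLinearMap.proj (R := ℝ) (φ := fun _ : Fin n => ℝ) i) y :=
    hasFDerivAt_apply i y
  rw [h.fderiv]
  rfl

/-- The ambient covariant derivative of `b - ĝ(y,b) y`, which restricts on the indicatrix to the
gradient of `y ↦ ĝ(y,b)`. -/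
theorem covVec_gradient (hF : IsMinkowskiNorm n F)
    (hA : ∀ y : Fin n → ℝ, y ≠ 0 → gF F y = A) (b : Fin n → ℝ) {y : Fin n → ℝ} (hy : y ≠ 0)
    (X : Fin n → ℝ) :
    covVec (gF F) (fun z => b - gmet (gF F) z b z • z) X y =
      -(gmet (gF F) y b X • y + gmet (gF F) y b y • X) := by
  let L : (Fin n → ℝ) →ₗ[ℝ] ℝ :=
    { toFun := fun z => b ⬝ᵥ (Matrix.of A).mulVec z
      map_add' := fun u v => by rw [Matrix.mulVec_add, dotProduct_add]
      map_smul' := fun r u => by rw [Matrix.mulVec_smul, dotProduct_smul]; rfl }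
  have hL : ∀ z : Fin n → ℝ, z ≠ 0 → ∀ v, gmet (gF F) z b v = L.toContinuousLinearMap v :=
    fun z hz v => gmet_of_const hA hz b v
  rw [covVec_of_const hF hA hy]
  funext i
  have he : (fun z => (b - gmet (gF F) z b z • z) i) =ᶠ[𝓝 y]
      fun z => b i - L.toContinuousLinearMap z * z i := by
    filter_upwards [isOpen_ne.mem_nhds hy] with z hz
    simp [hL z hz]
  have hp : DifferentiableAt ℝ (fun z : Fin n → ℝ => z i) y := by fun_prop
  have hd : DifferentiableAt ℝ (fun z => L.toContinuousLinearMap z) y :=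
    L.toContinuousLinearMap.differentiableAt
  rw [he.fderiv_eq, fderiv_const_sub, fderiv_fun_mul hd hp]
  simp only [neg_apply, add_apply, smul_apply,
    fderiv_proj, ContinuousLinearMap.fderiv, hL y hy, Pi.neg_apply, Pi.add_apply, Pi.smul_apply,
    smul_eq_mul]
  ring

theorem gmet_euclG (y u v : Fin n → ℝ) : gmet (euclG n) y u v = u ⬝ᵥ v := by
  simp [gmet, euclG, dotProduct]

/-- A symmetric positive definite bilinear form is the pullback of the Euclidean dot product
under an invertible linear map. -/
theorem exists_isometry (hsymm : ∀ i j, A i j = A j i)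
    (hpos : ∀ X : Fin n → ℝ, X ≠ 0 → 0 < X ⬝ᵥ (Matrix.of A).mulVec X) :
    ∃ B : Matrix (Fin n) (Fin n) ℝ, IsUnit B.det ∧
      ∀ u v : Fin n → ℝ, u ⬝ᵥ (Matrix.of A).mulVec v = B.mulVec u ⬝ᵥ B.mulVec v := by
  have hpd : (Matrix.of A).PosDef := by
    refine Matrix.PosDef.of_dotProduct_mulVec_pos ?_ fun x hx => by simpa using hpos x hx
    ext i j
    simpa using hsymm j i
  open scoped MatrixOrder in
  obtain ⟨B, hB⟩ := CStarAlgebra.nonneg_iff_eq_star_mul_self.mp hpd.posSemidef.nonneg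
  rw [Matrix.star_eq_conjTranspose, Matrix.conjTranspose_eq_transpose_of_trivial] at hB
  refine ⟨B, ?_, fun u v => ?_⟩
  · have h := (Matrix.isUnit_iff_isUnit_det _).mp hpd.isUnit
    rw [hB, Matrix.det_mul] at h
    exact isUnit_of_mul_isUnit_right h
  · rw [hB, ← Matrix.mulVec_mulVec, Matrix.dotProduct_mulVec, Matrix.vecMul_transpose]

theorem pathLength_mulVec (hF : IsMinkowskiNorm n F)
    (hA : ∀ y : Fin n → ℝ, y ≠ 0 → gF F y = A) {B : Matrix (Fin n) (Fin n) ℝ}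
    (hB : ∀ u v : Fin n → ℝ, u ⬝ᵥ (Matrix.of A).mulVec v = B.mulVec u ⬝ᵥ B.mulVec v)
    {c : ℝ → Fin n → ℝ} (hc : ContDiff ℝ 1 c) (hS : ∀ t ∈ Icc (0 : ℝ) 1, F (c t) = 1) :
    pathLength (euclG n) (fun t => B.mulVec (c t)) = pathLength (gF F) c := by
  refine intervalIntegral.integral_congr fun t ht => ?_
  rw [uIcc_of_le zero_le_one] at ht
  have hd : HasDerivAt (fun t => B.mulVec (c t)) (B.mulVec (deriv c t)) t :=
    (B.mulVecLin.toContinuousLinearMap.hasFDerivAt (x := c t)).comp_hasDerivAt t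
      ((hc.differentiable (by simp)) t).hasDerivAt
  simp only [gmet_euclG, hd.deriv, gmet_of_const hA (ne_zero_of_norm_eq_one hF (hS t ht)), hB]

theorem contDiff_mulVec (B : Matrix (Fin n) (Fin n) ℝ) {c : ℝ → Fin n → ℝ}
    (hc : ContDiff ℝ 1 c) : ContDiff ℝ 1 (fun t => B.mulVec (c t)) :=
  B.mulVecLin.toContinuousLinearMap.contDiff.comp hc

/-- If the metric is constant, the indicatrix is the preimage of the unit sphere under the
linear isometry `B`. -/
theorem norm_eq_one_iff (hF : IsMinkowskiNorm n F)
    (hA : ∀ y : Fin n → ℝ, y ≠ 0 → gF F y = A) {B : Matrix (Fin n) (Fin n) ℝ}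
    (hB : ∀ u v : Fin n → ℝ, u ⬝ᵥ (Matrix.of A).mulVec v = B.mulVec u ⬝ᵥ B.mulVec v)
    (y : Fin n → ℝ) : F y = 1 ↔ B.mulVec y ∈ euclSphere n 1 := by
  have hs : B.mulVec y ∈ euclSphere n 1 ↔ B.mulVec y ⬝ᵥ B.mulVec y = 1 := by
    simp [euclSphere, dotProduct, sq]
  rw [hs]
  by_cases hy : y = 0
  · subst hy
    simp only [Matrix.mulVec_zero, dotProduct_zero, zero_ne_one, iff_false]
    exact fun h => ne_zero_of_norm_eq_one hF h rfl
  · rw [← hB, ← gmet_of_const hA hy, gmet_gF_self hF hy]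
    exact (pow_eq_one_iff_of_nonneg (hF.nonneg y) two_ne_zero).symm

/-- Composition with `B` and with `B⁻¹` matches the `C¹` paths on the indicatrix with those on the
sphere and preserves lengths, so the two sets of lengths coincide. -/
theorem pathDist_mulVec (hF : IsMinkowskiNorm n F)
    (hA : ∀ y : Fin n → ℝ, y ≠ 0 → gF F y = A) {B : Matrix (Fin n) (Fin n) ℝ}
    (hdet : IsUnit B.det)
    (hB : ∀ u v : Fin n → ℝ, u ⬝ᵥ (Matrix.of A).mulVec v = B.mulVec u ⬝ᵥ B.mulVec v)
    (p q : Fin n → ℝ) :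
    pathDist (gF F) {y | F y = 1} p q =
      pathDist (euclG n) (euclSphere n 1) (B.mulVec p) (B.mulVec q) := by
  have hinv : ∀ z, B.mulVec (B⁻¹.mulVec z) = z := fun z => by
    rw [Matrix.mulVec_mulVec, Matrix.mul_nonsing_inv _ hdet, Matrix.one_mulVec]
  have hinv' : ∀ z, B⁻¹.mulVec (B.mulVec z) = z := fun z => by
    rw [Matrix.mulVec_mulVec, Matrix.nonsing_inv_mul _ hdet, Matrix.one_mulVec]
  refine congrArg sInf (Set.ext fun L => ⟨?_, ?_⟩)
  · rintro ⟨c, hc, h0, h1, hS, rfl⟩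
    exact ⟨fun t => B.mulVec (c t), contDiff_mulVec B hc, by simp only [h0], by simp only [h1],
      fun t ht => (norm_eq_one_iff hF hA hB _).mp (hS t ht),
      (pathLength_mulVec hF hA hB hc hS).symm⟩
  · rintro ⟨c, hc, h0, h1, hS, rfl⟩
    have hS' : ∀ t ∈ Icc (0 : ℝ) 1, F (B⁻¹.mulVec (c t)) = 1 := fun t ht =>
      (norm_eq_one_iff hF hA hB _).mpr (by rw [hinv]; exact hS t ht)
    refine ⟨fun t => B⁻¹.mulVec (c t), contDiff_mulVec B⁻¹ hc, by simp only [h0, hinv'],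
      by simp only [h1, hinv'], hS', ?_⟩
    rw [← pathLength_mulVec hF hA hB (contDiff_mulVec B⁻¹ hc) hS']
    simp only [hinv]

theorem bijOn_mulVec (hF : IsMinkowskiNorm n F)
    (hA : ∀ y : Fin n → ℝ, y ≠ 0 → gF F y = A) {B : Matrix (Fin n) (Fin n) ℝ}
    (hdet : IsUnit B.det)
    (hB : ∀ u v : Fin n → ℝ, u ⬝ᵥ (Matrix.of A).mulVec v = B.mulVec u ⬝ᵥ B.mulVec v) :
    BijOn B.mulVec {y | F y = 1} (euclSphere n 1) := by
  have hu := (Matrix.isUnit_iff_isUnit_det _).mpr hdet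
  refine ⟨fun y hy => (norm_eq_one_iff hF hA hB y).mp hy,
    (Matrix.mulVec_injective_iff_isUnit.mpr hu).injOn, fun z hz => ?_⟩
  obtain ⟨y, rfl⟩ := Matrix.mulVec_surjective_iff_isUnit.mpr hu z
  exact ⟨y, (norm_eq_one_iff hF hA hB y).mpr hz, rfl⟩

/-- With a flat ambient metric and shape operator `± Id`, the Gauss equation gives curvature `1`.
-/
theorem hypSec_of_const (hF : IsMinkowskiNorm n F)
    (hA : ∀ y : Fin n → ℝ, y ≠ 0 → gF F y = A) {y : Fin n → ℝ} (hy : y ≠ 0)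
    {U V : Fin n → ℝ} (hUV : LinearIndependent ℝ ![U, V]) :
    hypSec (gF F) (fun z => z) y U V = 1 := by
  have hcov : ∀ X, covVec (gF F) (fun z => z) X y = X := fun X => by
    rw [covVec_of_const hF hA hy]
    exact funext (fderiv_proj y X)
  have hamb : ambSec (gF F) y U V = 0 := by
    simp [ambSec, riemVec, riem_of_const hF hA hy, gmet]
  -- strict Cauchy–Schwarz: apply positivity to `g(V,V) U - g(U,V) V`
  have hne : gmet (gF F) y U U * gmet (gF F) y V V - gmet (gF F) y U V ^ 2 ≠ 0 := by
    intro h0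
    have hpair := LinearIndependent.pair_iff.mp hUV
    have hV : V ≠ 0 := hUV.ne_zero 1
    have hVV := hF.posdef y hy V hV
    have hW : gmet (gF F) y V V • U + (-gmet (gF F) y U V) • V ≠ 0 :=
      fun h => hVV.ne' (hpair _ _ h).1
    have hWW := hF.posdef y hy _ hW
    have hsymm : gmet (gF F) y V U = gmet (gF F) y U V :=
      gmet_gF_comm hF hy V U
    have hexp : gmet (gF F) y (gmet (gF F) y V V • U + (-gmet (gF F) y U V) • V)
        (gmet (gF F) y V V • U + (-gmet (gF F) y U V) • V) =
        gmet (gF F) y V V *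
          (gmet (gF F) y U U * gmet (gF F) y V V - gmet (gF F) y U V ^ 2) := by
      generalize hp : gmet (gF F) y V V = p at *
      generalize hq : gmet (gF F) y U V = q at *
      simp only [gmet_eq_dotProduct] at *
      simp only [Matrix.mulVec_add, Matrix.mulVec_smul, dotProduct_add, add_dotProduct,
        dotProduct_smul, smul_dotProduct, smul_eq_mul, hp, hq, hsymm]
      ring
    rw [hexp, h0, mul_zero] at hWW
    exact lt_irrefl _ hWW
  rw [hypSec, hamb, hcov, hcov, zero_add, div_self hne]

end ConstantMetric

/-- If `b ≠ 0` is a constant `∇̂`-parallel vector field, then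
`f(y) = ĝ(y,b)` restricted to `S(1) = {F = 1}` satisfies the Obata equation
`∇_X ∇f + f X = 0` (where `∇` is the induced connection, i.e. the tangential part of the
ambient covariant derivative); consequently `S(1)` is isometric to the unit round sphere
and has constant sectional curvature `1`. -/
theorem obata_on_S1 {n : ℕ} (hn : 3 ≤ n) (F : (Fin n → ℝ) → ℝ)
    (hF : IsMinkowskiNorm n F) (b : Fin n → ℝ) (hb : b ≠ 0)
    (hpar : ∀ y : Fin n → ℝ, y ≠ 0 → ∀ X : Fin n → ℝ,
      covVec (gF F) (fun _ => b) X y = 0) :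
    (∀ y : Fin n → ℝ, F y = 1 → ∀ X : Fin n → ℝ, gmet (gF F) y X y = 0 →
      (covVec (gF F) (fun z => b - gmet (gF F) z b z • z) X y -
          gmet (gF F) y (covVec (gF F) (fun z => b - gmet (gF F) z b z • z) X y) y • y) +
        gmet (gF F) y y b • X = 0) ∧
    (∃ φ : (Fin n → ℝ) → Fin n → ℝ,
      Set.BijOn φ {y | F y = 1} (euclSphere n 1) ∧
      ∀ a ∈ {y | F y = 1}, ∀ c ∈ {y : Fin n → ℝ | F y = 1},
        pathDist (gF F) {y | F y = 1} a c =
          pathDist (euclG n) (euclSphere n 1) (φ a) (φ c)) ∧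
    (∀ y : Fin n → ℝ, F y = 1 → ∀ U V : Fin n → ℝ,
      gmet (gF F) y U y = 0 → gmet (gF F) y V y = 0 → LinearIndependent ℝ ![U, V] →
        hypSec (gF F) (fun z => z) y U V = 1) := by
  have hA : ∀ y : Fin n → ℝ, y ≠ 0 → gF F y = gF F b := fun y hy => gF_const hn hF hb hpar hy
  refine ⟨fun y hy X hX => ?_, ?_, fun y hy U V _ _ hUV =>
    hypSec_of_const hF hA (ne_zero_of_norm_eq_one hF hy) hUV⟩
  · have hy0 := ne_zero_of_norm_eq_one hF hy
    have hyy : y ⬝ᵥ (Matrix.of (gF F b)).mulVec y = 1 := by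
      rw [← gmet_of_const hA hy0, gmet_gF_self hF hy0, hy, one_pow]
    have hsymm : gmet (gF F) y y b = gmet (gF F) y b y :=
      gmet_gF_comm hF hy0 y b
    rw [covVec_gradient hF hA b hy0, hsymm]
    have hn1 : gmet (gF F) y (-(gmet (gF F) y b X • y + gmet (gF F) y b y • X)) y =
        -gmet (gF F) y b X := by
      generalize gmet (gF F) y b X = p
      generalize gmet (gF F) y b y = q
      rw [gmet_of_const hA hy0] at hX ⊢
      simp only [neg_dotProduct, add_dotProduct, smul_dotProduct, hX, hyy, smul_eq_mul]
      ring
    rw [hn1]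
    module
  · obtain ⟨B, hdet, hB⟩ := exists_isometry (A := gF F b) (gF_symm hF hb) fun X hX => by
      rw [← gmet_of_const hA hb]; exact hF.posdef b hb X hX
    exact ⟨B.mulVec, bijOn_mulVec hF hA hdet hB, fun a _ c _ =>
      pathDist_mulVec hF hA hdet hB a c⟩
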